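/- Let b ∈ 𝒮((ℤⁿ)^p) with p ∈ ℕ, let P_j ∈ ℝ[X₁,…,Xₙ] be a homogeneous polynomial of degree j, let r ∈ ℕ₀, and let φ be a real-valued function on ℤⁿ × (ℤⁿ)^p. Define h(s,k,l) := b(l) P_j(k) e^{iφ(k,l)} / (|k|^{s+r} |k+l̂₁|² ⋯ |k+l̂_p|²), with h(s,k,l) := 0 if k = 0 or a denominator vanishes, and H(s,l) := Σ'_{k∈ℤⁿ} h(s,k,l). If r + 2p − j > n, then H satisfies hypothesis (H1): there exists ρ > 0 such that for every l, the map s ↦ H(s,l) extends holomorphically to the open disk U_ρ of center 0 and radius ρ, and the series Σ_{l∈(ℤⁿ)^p} sup_{s∈U_ρ} |H(s,l)| is finite. -/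

import Mathlib

noncomputable section

/-- Euclidean norm of an integer vector `k ∈ ℤⁿ`. -/
def znorm {n : ℕ} (k : Fin n → ℤ) : ℝ := Real.sqrt (∑ i, ((k i : ℝ)) ^ 2)

/-- Schwartz (rapidly decreasing) sequences on `(ℤⁿ)^p`. -/
def IsSchwartzSeq {p n : ℕ} (b : (Fin p → Fin n → ℤ) → ℂ) : Prop :=
  ∀ r : ℕ, ∃ C : ℝ, ∀ l : Fin p → Fin n → ℤ,
    (1 + ∑ i, ∑ a, ((l i a : ℝ)) ^ 2) ^ r * ‖b l‖ ^ 2 ≤ C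

/-- Partial sums `l̂ᵢ = l₁ + ⋯ + lᵢ` of a tuple `l ∈ (ℤⁿ)^p`. -/
def lhat {p n : ℕ} (l : Fin p → Fin n → ℤ) (i : Fin p) : Fin n → ℤ :=
  ∑ j ∈ Finset.Iic i, l j

/-- The term `h(s,k,l) = b(l) P_j(k) e^{iφ(k,l)} / (|k|^{s+r} |k+l̂₁|²⋯|k+l̂_p|²)`,
set to `0` when `k = 0` or one of the denominators vanishes. -/
def hTerm {n p : ℕ} (b : (Fin p → Fin n → ℤ) → ℂ) (Pj : MvPolynomial (Fin n) ℝ) (r : ℕ)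
    (φ : (Fin n → ℤ) → (Fin p → Fin n → ℤ) → ℝ) (s : ℂ) (k : Fin n → ℤ)
    (l : Fin p → Fin n → ℤ) : ℂ :=
  if k = 0 ∨ ∃ i : Fin p, k + lhat l i = 0 then 0
  else b l * ((MvPolynomial.eval (fun i => ((k i : ℤ) : ℝ)) Pj : ℝ) : ℂ) *
      Complex.exp (Complex.I * ((φ k l : ℝ) : ℂ)) /
    ((znorm k : ℂ) ^ (s + (r : ℂ)) * ∏ i : Fin p, ((znorm (k + lhat l i) : ℝ) : ℂ) ^ 2)

/-- `H(s,l) = Σ'_{k∈ℤⁿ} h(s,k,l)`. -/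
def Hfun {n p : ℕ} (b : (Fin p → Fin n → ℤ) → ℂ) (Pj : MvPolynomial (Fin n) ℝ) (r : ℕ)
    (φ : (Fin n → ℤ) → (Fin p → Fin n → ℤ) → ℝ) (s : ℂ) (l : Fin p → Fin n → ℤ) : ℂ :=
  ∑' k : Fin n → ℤ, hTerm b Pj r φ s k l

/-! For `k + l̂ᵢ ≠ 0` the denominators are lattice norms `≥ 1`, so Peetre's inequality
`|k| ≤ (1 + |l̂ᵢ|) |k + l̂ᵢ|` trades each factor `|k + l̂ᵢ|⁻²` for `|k|⁻²`, at the price of a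
power of `w(l) = 1 + |l₁|² + ⋯ + |l_p|²`. Hence `|h(s,k,l)| ≤ C |b(l)| w(l)^(2p) |k|^(-e)` with
`e = σ + r + 2p - deg P`, uniformly for `Re s ≥ σ`. If `e > n`, the Weierstrass test in `k` makes
`H(·,l)` holomorphic for `Re s > σ` and bounds it by a multiple of `|b(l)| w(l)^(2p)`, which is
summable because `b` is rapidly decreasing. -/

section LatticeSums

variable {ι : Type*} [Fintype ι]

lemma summable_norm_sum_zsmul_rpow {E : Type*} [NormedAddCommGroup E] [NormedSpace ℝ E]
    (B : Module.Basis ι ℝ E) {e : ℝ} (he : Fintype.card ι < e) :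
    Summable fun k : ι → ℤ => ‖∑ i, k i • B i‖ ^ (-e) := by
  have : FiniteDimensional ℝ E := .of_basis B
  let L := Submodule.span ℤ (Set.range B)
  let BL : Module.Basis ι ℤ L := B.restrictScalars ℤ
  have hBL (i : ι) : (BL i : E) = B i := B.restrictScalars_apply ℤ i
  have hL : Summable fun z : L => ‖z‖ ^ (-e) :=
    ZLattice.summable_norm_rpow L (-e) (by rw [Module.finrank_eq_card_basis BL]; linarith)
  refine (BL.equivFun.symm.toEquiv.summable_iff.mpr hL).congr fun k => ?_
  simp [Module.Basis.equivFun_symm_apply, hBL]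

lemma summable_sqrt_sum_sq_rpow {e : ℝ} (he : Fintype.card ι < e) :
    Summable fun k : ι → ℤ => √(∑ i, (k i : ℝ) ^ 2) ^ (-e) := by
  classical
  refine (summable_norm_sum_zsmul_rpow (EuclideanSpace.basisFun ι ℝ).toBasis he).congr fun k => ?_
  simp [EuclideanSpace.norm_eq, Pi.single_apply]

lemma one_le_sum_sq {k : ι → ℤ} (hk : k ≠ 0) : 1 ≤ ∑ i, (k i : ℝ) ^ 2 := by
  obtain ⟨i, hi⟩ := Function.ne_iff.mp hk
  calc (1 : ℝ) ≤ (k i : ℝ) ^ 2 := mod_cast Int.add_one_le_of_lt (pow_two_pos_of_ne_zero hi)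
    _ ≤ ∑ i, (k i : ℝ) ^ 2 :=
        Finset.single_le_sum (f := fun i => (k i : ℝ) ^ 2) (fun _ _ => sq_nonneg _)
          (Finset.mem_univ i)

lemma summable_one_add_sum_sq_rpow {e : ℝ} (he : Fintype.card ι < 2 * e) :
    Summable fun k : ι → ℤ => (1 + ∑ i, (k i : ℝ) ^ 2) ^ (-e) := by
  refine (summable_sqrt_sum_sq_rpow he).of_norm_bounded_eventually ?_
  filter_upwards [(Set.finite_singleton (0 : ι → ℤ)).compl_mem_cofinite] with k hk
  have hS : 1 ≤ ∑ i, (k i : ℝ) ^ 2 := one_le_sum_sq hk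
  rw [Real.norm_of_nonneg (by positivity), Real.sqrt_eq_rpow, ← Real.rpow_mul (by positivity)]
  have he_pos : 0 < 2 * e := (Nat.cast_nonneg _).trans_lt he
  calc (1 + ∑ i, (k i : ℝ) ^ 2) ^ (-e) ≤ (∑ i, (k i : ℝ) ^ 2) ^ (-e) :=
        Real.rpow_le_rpow_of_nonpos (by positivity) (by linarith) (by linarith [he_pos])
    _ = (∑ i, (k i : ℝ) ^ 2) ^ (1 / 2 * -(2 * e)) := by congr 1; ring

end LatticeSums

section Znorm

variable {n : ℕ}

lemma znorm_eq_norm (k : Fin n → ℤ) :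
    znorm k = ‖(WithLp.toLp 2 fun i => (k i : ℝ) : EuclideanSpace ℝ (Fin n))‖ := by
  simp [znorm, EuclideanSpace.norm_eq]

lemma znorm_nonneg (k : Fin n → ℤ) : 0 ≤ znorm k := Real.sqrt_nonneg _

lemma znorm_sq (k : Fin n → ℤ) : znorm k ^ 2 = ∑ i, (k i : ℝ) ^ 2 :=
  Real.sq_sqrt (by positivity)

lemma znorm_zero : znorm (0 : Fin n → ℤ) = 0 := by simp [znorm]

lemma znorm_neg (k : Fin n → ℤ) : znorm (-k) = znorm k := by simp [znorm]

lemma znorm_add_le (k m : Fin n → ℤ) : znorm (k + m) ≤ znorm k + znorm m := by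
  simp only [znorm_eq_norm]
  refine le_of_eq_of_le (congrArg norm ?_) (norm_add_le _ _)
  ext i
  simp

lemma one_le_znorm {k : Fin n → ℤ} (hk : k ≠ 0) : 1 ≤ znorm k :=
  Real.one_le_sqrt.mpr (one_le_sum_sq hk)

lemma znorm_pos {k : Fin n → ℤ} (hk : k ≠ 0) : 0 < znorm k :=
  one_pos.trans_le (one_le_znorm hk)

lemma abs_apply_le_znorm (k : Fin n → ℤ) (i : Fin n) : |(k i : ℝ)| ≤ znorm k := by
  rw [znorm_eq_norm]
  exact PiLp.norm_apply_le (WithLp.toLp 2 fun i => (k i : ℝ) : EuclideanSpace ℝ (Fin n)) i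

lemma znorm_le_sq (k : Fin n → ℤ) : znorm k ≤ znorm k ^ 2 := by
  rcases eq_or_ne k 0 with rfl | hk
  · simp [znorm_zero]
  · exact le_self_pow₀ (one_le_znorm hk) two_ne_zero

lemma znorm_le_one_add_mul_znorm_add {k m : Fin n → ℤ} (h : k + m ≠ 0) :
    znorm k ≤ (1 + znorm m) * znorm (k + m) := by
  have htriangle : znorm k ≤ znorm (k + m) + znorm m := by
    simpa [znorm_neg] using znorm_add_le (k + m) (-m)
  nlinarith [one_le_znorm h, znorm_nonneg m]

lemma summable_znorm_rpow {e : ℝ} (he : n < e) :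
    Summable fun k : Fin n → ℤ => znorm k ^ (-e) :=
  summable_sqrt_sum_sq_rpow (by simpa using he)

end Znorm

section TupleWeight

variable {p n : ℕ}

/-- The weight `1 + |l₁|² + ⋯ + |l_p|²` on `(ℤⁿ)^p`, against whose powers the decay of a Schwartz
sequence is measured. -/
def tupleWeight (l : Fin p → Fin n → ℤ) : ℝ := 1 + ∑ i, znorm (l i) ^ 2

lemma tupleWeight_pos (l : Fin p → Fin n → ℤ) : 0 < tupleWeight l := by
  unfold tupleWeight
  positivity

lemma one_add_znorm_lhat_le (l : Fin p → Fin n → ℤ) (i : Fin p) :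
    1 + znorm (lhat l i) ≤ tupleWeight l := by
  refine add_le_add_right ?_ 1
  calc znorm (lhat l i) ≤ ∑ j ∈ Finset.Iic i, znorm (l j) :=
        Finset.le_sum_of_subadditive znorm znorm_zero.le znorm_add_le _ _
    _ ≤ ∑ j, znorm (l j) :=
        Finset.sum_le_univ_sum_of_nonneg fun j => znorm_nonneg (l j)
    _ ≤ ∑ j, znorm (l j) ^ 2 := Finset.sum_le_sum fun j _ => znorm_le_sq (l j)

lemma znorm_pow_le_tupleWeight_pow_mul_prod {k : Fin n → ℤ} {l : Fin p → Fin n → ℤ}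
    (h : ∀ i, k + lhat l i ≠ 0) :
    znorm k ^ (2 * p) ≤ tupleWeight l ^ (2 * p) * ∏ i, znorm (k + lhat l i) ^ 2 := by
  have hfactor (i : Fin p) : znorm k ≤ tupleWeight l * znorm (k + lhat l i) :=
    (znorm_le_one_add_mul_znorm_add (h i)).trans
      (mul_le_mul_of_nonneg_right (one_add_znorm_lhat_le l i) (znorm_nonneg _))
  calc znorm k ^ (2 * p) = ∏ _i : Fin p, znorm k ^ 2 := by simp [pow_mul]
    _ ≤ ∏ i, (tupleWeight l * znorm (k + lhat l i)) ^ 2 :=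
        Finset.prod_le_prod (fun _ _ => sq_nonneg _)
          fun i _ => pow_le_pow_left₀ (znorm_nonneg k) (hfactor i) 2
    _ = tupleWeight l ^ (2 * p) * ∏ i, znorm (k + lhat l i) ^ 2 := by
        simp [mul_pow, Finset.prod_mul_distrib, pow_mul]

lemma znorm_pow_le_mul_denominator {k : Fin n → ℤ} {l : Fin p → Fin n → ℤ} (hk : k ≠ 0)
    (hl : ∀ i, k + lhat l i ≠ 0) {σ τ : ℝ} (hστ : σ ≤ τ) (r d : ℕ) :
    znorm k ^ d ≤ tupleWeight l ^ (2 * p) * znorm k ^ (-(σ + r + 2 * p - d)) *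
      (znorm k ^ (τ + r) * ∏ i, znorm (k + lhat l i) ^ 2) := by
  have hk_pos := znorm_pos hk
  have hexponent : (d : ℝ) ≤ -(σ + r + 2 * p - d) + (τ + r) + (2 * p : ℕ) := by
    push_cast
    linarith
  calc znorm k ^ d
      ≤ znorm k ^ (-(σ + r + 2 * p - d)) * znorm k ^ (τ + r) * znorm k ^ (2 * p) := by
        rw [← Real.rpow_natCast _ d, ← Real.rpow_natCast _ (2 * p), ← Real.rpow_add hk_pos,
          ← Real.rpow_add hk_pos]
        exact Real.rpow_le_rpow_of_exponent_le (one_le_znorm hk) hexponent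
    _ ≤ znorm k ^ (-(σ + r + 2 * p - d)) * znorm k ^ (τ + r) *
          (tupleWeight l ^ (2 * p) * ∏ i, znorm (k + lhat l i) ^ 2) := by
        gcongr
        exact znorm_pow_le_tupleWeight_pow_mul_prod hl
    _ = _ := by ring

lemma summable_tupleWeight_rpow {e : ℝ} (he : (p * n : ℝ) < 2 * e) :
    Summable fun l : Fin p → Fin n → ℤ => tupleWeight l ^ (-e) := by
  have hflat := summable_one_add_sum_sq_rpow (ι := Fin p × Fin n) (e := e) (by simpa using he)
  refine ((Equiv.curry (Fin p) (Fin n) ℤ).symm.summable_iff.mpr hflat).congr fun l => ?_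
  simp [tupleWeight, znorm_sq, Fintype.sum_prod_type]

lemma IsSchwartzSeq.exists_norm_mul_tupleWeight_pow_le {b : (Fin p → Fin n → ℤ) → ℂ}
    (hb : IsSchwartzSeq b) (N : ℕ) : ∃ C, ∀ l, ‖b l‖ * tupleWeight l ^ N ≤ C := by
  obtain ⟨C, hC⟩ := hb (2 * N)
  refine ⟨√C, fun l => Real.le_sqrt_of_sq_le (le_of_eq_of_le ?_ (hC l))⟩
  simp only [tupleWeight, znorm_sq]
  ring

lemma IsSchwartzSeq.summable_norm_mul_tupleWeight_pow {b : (Fin p → Fin n → ℤ) → ℂ}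
    (hb : IsSchwartzSeq b) (N : ℕ) : Summable fun l => ‖b l‖ * tupleWeight l ^ N := by
  set M := p * n + 1
  obtain ⟨C, hC⟩ := hb.exists_norm_mul_tupleWeight_pow_le (N + M)
  have hM : (p * n : ℝ) < 2 * (M : ℝ) := by
    simp only [M]
    push_cast
    linarith [mul_nonneg (Nat.cast_nonneg (α := ℝ) p) (Nat.cast_nonneg n)]
  refine .of_nonneg_of_le (fun l => ?_) (fun l => ?_)
    ((summable_tupleWeight_rpow hM).mul_left C)
  · have := tupleWeight_pos l
    positivity
  · have hw := tupleWeight_pos l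
    rw [Real.rpow_neg hw.le, Real.rpow_natCast, ← div_eq_mul_inv, le_div_iff₀ (pow_pos hw M),
      mul_assoc, ← pow_add]
    exact hC l

end TupleWeight

section CoeffNorm

variable {τ R : Type*} [NormedCommRing R]

/-- The `ℓ¹` norm of the coefficients of a multivariate polynomial, the constant in its growth
bound. -/
def coeffNorm (P : MvPolynomial τ R) : ℝ := ∑ d ∈ P.support, ‖P.coeff d‖

lemma coeffNorm_nonneg (P : MvPolynomial τ R) : 0 ≤ coeffNorm P :=
  Finset.sum_nonneg fun _ _ => norm_nonneg _

lemma norm_eval_le_coeffNorm_mul_pow [NormOneClass R] (P : MvPolynomial τ R) {x : τ → R} {M : ℝ}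
    (hM : 1 ≤ M) (hx : ∀ i, ‖x i‖ ≤ M) :
    ‖MvPolynomial.eval x P‖ ≤ coeffNorm P * M ^ P.totalDegree := by
  have hmonomial (d : τ →₀ ℕ) (hd : d ∈ P.support) :
      ‖∏ i ∈ d.support, x i ^ d i‖ ≤ M ^ P.totalDegree :=
    calc ‖∏ i ∈ d.support, x i ^ d i‖ ≤ ∏ i ∈ d.support, ‖x i ^ d i‖ :=
          Finset.norm_prod_le _ _
      _ ≤ ∏ i ∈ d.support, M ^ d i :=
          Finset.prod_le_prod (fun _ _ => norm_nonneg _) fun i _ =>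
            (norm_pow_le _ _).trans (pow_le_pow_left₀ (norm_nonneg _) (hx i) _)
      _ = M ^ ∑ i ∈ d.support, d i := Finset.prod_pow_eq_pow_sum _ _ _
      _ ≤ M ^ P.totalDegree := pow_le_pow_right₀ hM (MvPolynomial.le_totalDegree hd)
  rw [MvPolynomial.eval_eq, coeffNorm, Finset.sum_mul]
  exact norm_sum_le_of_le _ fun d hd =>
    (norm_mul_le _ _).trans (mul_le_mul_of_nonneg_left (hmonomial d hd) (norm_nonneg _))

end CoeffNorm

lemma summable_biSup_of_le {α β : Type*} {f : α → β → ℝ} {g : β → ℝ} {U : Set α}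
    (hg : Summable g) (hg_nonneg : ∀ y, 0 ≤ g y) (hf_nonneg : ∀ x ∈ U, ∀ y, 0 ≤ f x y)
    (hfg : ∀ x ∈ U, ∀ y, f x y ≤ g y) : Summable fun y => ⨆ x ∈ U, f x y :=
  .of_nonneg_of_le
    (fun y => Real.iSup_nonneg fun x => Real.iSup_nonneg fun hx => hf_nonneg x hx y)
    (fun y => Real.iSup_le (fun x => Real.iSup_le (fun hx => hfg x hx y) (hg_nonneg y))
      (hg_nonneg y)) hg

section ZetaTerm

variable {n p : ℕ} (b : (Fin p → Fin n → ℤ) → ℂ) (P : MvPolynomial (Fin n) ℝ) (r : ℕ)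
  (φ : (Fin n → ℤ) → (Fin p → Fin n → ℤ) → ℝ)

lemma hTerm_eq_zero {k : Fin n → ℤ} {l : Fin p → Fin n → ℤ}
    (h : k = 0 ∨ ∃ i, k + lhat l i = 0) (s : ℂ) : hTerm b P r φ s k l = 0 :=
  if_pos h

lemma norm_hTerm {k : Fin n → ℤ} {l : Fin p → Fin n → ℤ} (hk : k ≠ 0)
    (hl : ∀ i, k + lhat l i ≠ 0) (s : ℂ) :
    ‖hTerm b P r φ s k l‖ = ‖b l‖ * ‖MvPolynomial.eval (fun i => (k i : ℝ)) P‖ /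
      (znorm k ^ (s.re + r) * ∏ i, znorm (k + lhat l i) ^ 2) := by
  have hne : ¬(k = 0 ∨ ∃ i, k + lhat l i = 0) := by simp [hk, hl]
  simp [hTerm, if_neg hne, Complex.norm_exp_I_mul_ofReal,
    Complex.norm_cpow_eq_rpow_re_of_pos (znorm_pos hk)]

lemma norm_hTerm_le {σ : ℝ} {s : ℂ} (hs : σ ≤ s.re) (k : Fin n → ℤ) (l : Fin p → Fin n → ℤ) :
    ‖hTerm b P r φ s k l‖ ≤ ‖b l‖ * tupleWeight l ^ (2 * p) * coeffNorm P *
      znorm k ^ (-(σ + r + 2 * p - P.totalDegree)) := by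
  have hw := tupleWeight_pos l
  have hC := coeffNorm_nonneg P
  have hk_nonneg := znorm_nonneg k
  by_cases h : k = 0 ∨ ∃ i, k + lhat l i = 0
  · rw [hTerm_eq_zero b P r φ h, norm_zero]
    positivity
  push Not at h
  obtain ⟨hk, hl⟩ := h
  have hprod : 0 < ∏ i, znorm (k + lhat l i) ^ 2 :=
    Finset.prod_pos fun i _ => pow_pos (znorm_pos (hl i)) 2
  have hden : 0 < znorm k ^ (s.re + r) * ∏ i, znorm (k + lhat l i) ^ 2 :=
    mul_pos (Real.rpow_pos_of_pos (znorm_pos hk) _) hprod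
  have heval : ‖MvPolynomial.eval (fun i => (k i : ℝ)) P‖ ≤
      coeffNorm P * znorm k ^ P.totalDegree :=
    norm_eval_le_coeffNorm_mul_pow P (one_le_znorm hk) (abs_apply_le_znorm k)
  rw [norm_hTerm b P r φ hk hl, div_le_iff₀ hden]
  calc ‖b l‖ * ‖MvPolynomial.eval (fun i => (k i : ℝ)) P‖
      ≤ ‖b l‖ * (coeffNorm P * znorm k ^ P.totalDegree) := by gcongr
    _ ≤ ‖b l‖ * (coeffNorm P * (tupleWeight l ^ (2 * p) *
          znorm k ^ (-(σ + r + 2 * p - P.totalDegree)) *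
          (znorm k ^ (s.re + r) * ∏ i, znorm (k + lhat l i) ^ 2))) := by
        gcongr
        exact znorm_pow_le_mul_denominator hk hl hs r _
    _ = _ := by ring

lemma differentiable_hTerm (k : Fin n → ℤ) (l : Fin p → Fin n → ℤ) :
    Differentiable ℂ fun s => hTerm b P r φ s k l := by
  by_cases h : k = 0 ∨ ∃ i, k + lhat l i = 0
  · simp only [hTerm_eq_zero b P r φ h]
    exact differentiable_const 0
  simp only [hTerm, if_neg h]
  push Not at h
  obtain ⟨hk, hl⟩ := h
  have hk_ne : (znorm k : ℂ) ≠ 0 := mod_cast (znorm_pos hk).ne'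
  have hprod_ne : ∏ i, (znorm (k + lhat l i) : ℂ) ^ 2 ≠ 0 :=
    Finset.prod_ne_zero_iff.mpr fun i _ => pow_ne_zero 2 (mod_cast (znorm_pos (hl i)).ne')
  refine fun s => (differentiableAt_const _).div
    (((differentiableAt_id.add_const _).const_cpow (.inl hk_ne)).mul_const _) ?_
  exact mul_ne_zero (by simp [Complex.cpow_eq_zero_iff, hk_ne]) hprod_ne

variable {σ : ℝ}

lemma differentiableOn_Hfun (hσ : n + P.totalDegree < σ + r + 2 * p)
    (l : Fin p → Fin n → ℤ) :
    DifferentiableOn ℂ (fun s => Hfun b P r φ s l) {s | σ < s.re} :=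
  Complex.differentiableOn_tsum_of_summable_norm
    ((summable_znorm_rpow (lt_sub_iff_add_lt.mpr hσ)).mul_left _)
    (fun k => (differentiable_hTerm b P r φ k l).differentiableOn)
    (isOpen_lt continuous_const Complex.continuous_re)
    fun k _ hs => norm_hTerm_le b P r φ (le_of_lt hs) k l

lemma norm_Hfun_le (hσ : n + P.totalDegree < σ + r + 2 * p) {s : ℂ} (hs : σ ≤ s.re)
    (l : Fin p → Fin n → ℤ) :
    ‖Hfun b P r φ s l‖ ≤ ‖b l‖ * tupleWeight l ^ (2 * p) * (coeffNorm P *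
      ∑' k : Fin n → ℤ, znorm k ^ (-(σ + r + 2 * p - P.totalDegree))) := by
  rw [← mul_assoc, ← tsum_mul_left]
  exact tsum_of_norm_bounded
    ((summable_znorm_rpow (lt_sub_iff_add_lt.mpr hσ)).mul_left _).hasSum
    fun k => norm_hTerm_le b P r φ hs k l

theorem Hfun_satisfies_H1_general (hσ : n + P.totalDegree < σ + r + 2 * p)
    (hb : IsSchwartzSeq b) {U : Set ℂ} (hU : ∀ s ∈ U, σ < s.re) :
    (∀ l, DifferentiableOn ℂ (fun s => Hfun b P r φ s l) U) ∧
      Summable fun l => ⨆ s ∈ U, ‖Hfun b P r φ s l‖ := by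
  have hzeta : 0 ≤ ∑' k : Fin n → ℤ, znorm k ^ (-(σ + r + 2 * p - P.totalDegree)) :=
    tsum_nonneg fun k => Real.rpow_nonneg (znorm_nonneg k) _
  have hbound_nonneg (l : Fin p → Fin n → ℤ) :
      0 ≤ ‖b l‖ * tupleWeight l ^ (2 * p) * (coeffNorm P *
        ∑' k : Fin n → ℤ, znorm k ^ (-(σ + r + 2 * p - P.totalDegree))) :=
    mul_nonneg (mul_nonneg (norm_nonneg _) (pow_nonneg (tupleWeight_pos l).le _))
      (mul_nonneg (coeffNorm_nonneg P) hzeta)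
  exact ⟨fun l => (differentiableOn_Hfun b P r φ hσ l).mono hU,
    summable_biSup_of_le ((hb.summable_norm_mul_tupleWeight_pow (2 * p)).mul_right _)
      hbound_nonneg (fun _ _ _ => norm_nonneg _)
      fun s hs l => norm_Hfun_le b P r φ hσ (hU s hs).le l⟩

end ZetaTerm

lemma neg_lt_re_of_mem_ball {ρ : ℝ} {s : ℂ} (hs : s ∈ Metric.ball 0 ρ) : -ρ < s.re :=
  neg_lt_of_abs_lt ((Complex.abs_re_le_norm s).trans_lt (mem_ball_zero_iff.mp hs))

/-- **Corollary.** With the notation above, if `r + 2p − j > n` then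
`H(s,l) = Σ'_k h(s,k,l)` satisfies hypothesis (H1): for some `ρ > 0`, each
`s ↦ H(s,l)` is holomorphic on the disk `U_ρ` and `Σ_l sup_{U_ρ} |H(·,l)| < ∞`. -/
theorem Hfun_satisfies_H1 (n p : ℕ) (hn : 0 < n) (hp : 0 < p) (j r : ℕ)
    (b : (Fin p → Fin n → ℤ) → ℂ) (hb : IsSchwartzSeq b)
    (Pj : MvPolynomial (Fin n) ℝ) (hPj : Pj.IsHomogeneous j)
    (φ : (Fin n → ℤ) → (Fin p → Fin n → ℤ) → ℝ)
    (hcond : n + j < r + 2 * p) :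
    ∃ ρ : ℝ, 0 < ρ ∧
      (∀ l : Fin p → Fin n → ℤ,
        DifferentiableOn ℂ (fun s => Hfun b Pj r φ s l) (Metric.ball (0 : ℂ) ρ)) ∧
      Summable (fun l : Fin p → Fin n → ℤ =>
        ⨆ s ∈ Metric.ball (0 : ℂ) ρ, ‖Hfun b Pj r φ s l‖) := by
  have hdeg : (n + Pj.totalDegree + 1 : ℝ) ≤ r + 2 * p :=
    mod_cast (by linarith [hPj.totalDegree_le] : n + Pj.totalDegree + 1 ≤ r + 2 * p)
  exact ⟨1 / 2, by norm_num,
    Hfun_satisfies_H1_general b Pj r φ (by linarith) hb fun _ => neg_lt_re_of_mem_ball⟩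

end
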